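/- arXiv:2501.08526 — 3 statements merged into one kernel-verified Lean document; each statement's English description precedes it below -/
import Mathlib

section
/- Let A be a unital C*-algebra over ℂ admitting a matricial chain (n_k, A_k), and let τ be a tracial state on A. If p and q are projections in A with τ(p) = τ(q), then p and q are Murray–von Neumann equivalent, i.e., there exists v ∈ A with p = v·star(v) and q = star(v)·v. -/
/-!
A projection `p` in the closure of a union of finite-dimensional star subalgebras is close to a
self-adjoint element of one of them; cutting the spectrum of that element at `1 / 2` gives a
projection `e` of the subalgebra with `‖p - e‖ < 1`, and projections at distance less than `1` are
Murray–von Neumann equivalent. So it is enough to compare two projections of a single matrix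
algebra. There every tracial functional is a multiple of the matrix trace, which on projections
computes the rank, and projections of equal rank are equivalent.
-/

open Matrix

/-- Murray–von Neumann equivalence of `p` and `q`, implemented by `v` with initial projection
`star v * v = q` and final projection `v * star v = p`. It is defined for arbitrary elements, but
is an equivalence relation only on projections. -/
def MurrayVonNeumannEquiv {A : Type*} [Mul A] [Star A] (p q : A) : Prop :=
  ∃ v : A, p = v * star v ∧ q = star v * v

namespace MurrayVonNeumannEquiv

theorem symm {A : Type*} [Mul A] [InvolutiveStar A] {p q : A} (h : MurrayVonNeumannEquiv p q) :
    MurrayVonNeumannEquiv q p := by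
  obtain ⟨v, hp, hq⟩ := h
  exact ⟨star v, by rwa [star_star], by rwa [star_star]⟩

theorem trans {A : Type*} [Semigroup A] [StarMul A] {p q r : A}
    (hpq : MurrayVonNeumannEquiv p q) (hqr : MurrayVonNeumannEquiv q r)
    (hp : IsIdempotentElem p) (hr : IsIdempotentElem r) : MurrayVonNeumannEquiv p r := by
  obtain ⟨u, hpu, hqu⟩ := hpq
  obtain ⟨v, hqv, hrv⟩ := hqr
  refine ⟨u * v, ?_, ?_⟩
  · calc p = u * star u * (u * star u) := by rw [← hpu, hp.eq]
      _ = u * (star u * u) * star u := by simp only [mul_assoc]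
      _ = u * (v * star v) * star u := by rw [← hqu, hqv]
      _ = u * v * star (u * v) := by simp only [star_mul, mul_assoc]
  · calc r = star v * v * (star v * v) := by rw [← hrv, hr.eq]
      _ = star v * (v * star v) * v := by simp only [mul_assoc]
      _ = star v * (star u * u) * v := by rw [← hqv, hqu]
      _ = star (u * v) * (u * v) := by simp only [star_mul, mul_assoc]

theorem map {A B F : Type*} [Mul A] [Star A] [Mul B] [Star B] [FunLike F A B] [MulHomClass F A B]
    [StarHomClass F A B] (f : F) {p q : A} (h : MurrayVonNeumannEquiv p q) :
    MurrayVonNeumannEquiv (f p) (f q) := by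
  obtain ⟨v, rfl, rfl⟩ := h
  exact ⟨f v, by rw [map_mul, map_star], by rw [map_mul, map_star]⟩

theorem apply_eq {A V : Type*} [Mul A] [Star A] {p q : A} {τ : A → V}
    (h : MurrayVonNeumannEquiv p q) (hτ : ∀ a b, τ (a * b) = τ (b * a)) : τ p = τ q := by
  obtain ⟨v, rfl, rfl⟩ := h
  exact hτ _ _

end MurrayVonNeumannEquiv

section CloseProjections

theorem mul_one_sub_sub_mul_sub {A : Type*} [Ring A] {p q : A} (hp : IsIdempotentElem p)
    (hq : IsIdempotentElem q) : p * (1 - (p - q) * (p - q)) = p * q * p := by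
  simp only [mul_sub, sub_mul, ← mul_assoc, mul_one, hp.eq, hq.eq]
  abel

theorem one_sub_sub_mul_sub_mul {A : Type*} [Ring A] {p q : A} (hp : IsIdempotentElem p)
    (hq : IsIdempotentElem q) : (1 - (p - q) * (p - q)) * p = p * q * p := by
  simp only [mul_sub, sub_mul, one_mul, mul_assoc, hp.eq, hq.eq]
  abel

variable {A : Type*} [CStarAlgebra A]

theorem exists_isSelfAdjoint_mul_mul_self_eq_one {w : A} (hw : IsSelfAdjoint w)
    (hw1 : ‖1 - w‖ < 1) :
    ∃ g : A, IsSelfAdjoint g ∧ (∀ b, Commute w b → Commute g b) ∧ w * (g * g) = 1 := by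
  let := CStarAlgebra.spectralOrder A
  have := CStarAlgebra.spectralOrderedRing A
  have hw0 : 0 ≤ w := by
    have hle : 1 - w ≤ algebraMap ℝ A ‖1 - w‖ :=
      ((IsSelfAdjoint.one A).sub hw).le_algebraMap_norm_self
    have hle1 : algebraMap ℝ A ‖1 - w‖ ≤ algebraMap ℝ A 1 := algebraMap_mono A hw1.le
    rw [map_one] at hle1
    exact (sub_le_self_iff 1).1 (hle.trans hle1)
  have hunit : IsUnit w := sub_sub_cancel 1 w ▸ isUnit_one_sub_of_norm_lt_one hw1
  have hpos : IsStrictlyPositive w := hunit.isStrictlyPositive hw0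
  have hcomm (b : A) (hb : Commute w b) : Commute (w ^ (-(1 / 2) : ℝ)) b := hb.cfc_nnreal _
  refine ⟨w ^ (-(1 / 2) : ℝ), CFC.rpow_nonneg.isSelfAdjoint, hcomm, ?_⟩
  rw [← mul_assoc, ← (hcomm w (.refl w)).eq, CFC.conjugate_rpow_neg_one_half w hpos]

/- With `w = 1 - (p - q) ^ 2`, which commutes with `p` and `q`, the partial isometry is
`p * q * w ^ (-1 / 2)`. -/
theorem murrayVonNeumannEquiv_of_norm_sub_lt_one {p q : A} (hp : IsStarProjection p)
    (hq : IsStarProjection q) (h : ‖p - q‖ < 1) : MurrayVonNeumannEquiv p q := by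
  have hpi := hp.isIdempotentElem
  have hqi := hq.isIdempotentElem
  have hd : IsSelfAdjoint (p - q) := hp.isSelfAdjoint.sub hq.isSelfAdjoint
  set w : A := 1 - (p - q) * (p - q) with hw
  have hwsa : IsSelfAdjoint w := (IsSelfAdjoint.one A).sub ((hd.commute_iff hd).1 (.refl _))
  have hw' : w = 1 - (q - p) * (q - p) := by rw [hw, ← neg_sub q p, neg_mul_neg]
  have hpw : p * w = p * q * p := mul_one_sub_sub_mul_sub hpi hqi
  have hqw : q * w = q * p * q := hw' ▸ mul_one_sub_sub_mul_sub hqi hpi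
  have hwp : Commute w p := (one_sub_sub_mul_sub_mul hpi hqi).trans hpw.symm
  have hwq : Commute w q := (hw' ▸ one_sub_sub_mul_sub_mul hqi hpi : w * q = _).trans hqw.symm
  have hw1 : ‖1 - w‖ < 1 := by
    rw [hw, sub_sub_cancel, hd.norm_mul_self]
    exact pow_lt_one₀ (norm_nonneg _) h two_ne_zero
  obtain ⟨g, hg, hcomm, hwg⟩ := exists_isSelfAdjoint_mul_mul_self_eq_one hwsa hw1
  have hgp : Commute g p := hcomm p hwp
  have hgq : Commute g q := hcomm q hwq
  have hstar : star (p * q * g) = g * q * p := by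
    simp only [star_mul, hp.isSelfAdjoint.star_eq, hq.isSelfAdjoint.star_eq, hg.star_eq, mul_assoc]
  refine ⟨p * q * g, ?_, ?_⟩
  · calc p = p * w * (g * g) := by rw [mul_assoc, hwg, mul_one]
      _ = p * (q * q) * p * (g * g) := by rw [hpw, hqi.eq]
      _ = p * q * g * star (p * q * g) := by
        rw [hstar]
        simp only [mul_assoc, hgp.eq, hgq.eq, hgp.left_comm, hgq.left_comm]
  · calc q = q * w * (g * g) := by rw [mul_assoc, hwg, mul_one]
      _ = q * (p * p) * q * (g * g) := by rw [hqw, hpi.eq]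
      _ = star (p * q * g) * (p * q * g) := by
        rw [hstar]
        simp only [mul_assoc, hgp.eq, hgq.eq, hgp.left_comm, hgq.left_comm]

end CloseProjections

section Approximation

theorem norm_mul_self_sub_self_le {A : Type*} [NormedRing A] [StarRing A] [CStarRing A] {p : A}
    (hp : IsStarProjection p) (a : A) : ‖a * a - a‖ ≤ ‖a - p‖ * (‖a - p‖ + 2) := by
  have hsplit : a * a - a = (a - p) * (a - p) + (a - p) * p - (1 - p) * (a - p) := by
    simp only [mul_sub, sub_mul, one_mul, hp.isIdempotentElem.eq]
    abel
  calc ‖a * a - a‖ ≤ ‖a - p‖ * ‖a - p‖ + ‖a - p‖ * ‖p‖ + ‖1 - p‖ * ‖a - p‖ := by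
        rw [hsplit]
        exact (norm_sub_le _ _).trans <| add_le_add ((norm_add_le _ _).trans <|
          add_le_add (norm_mul_le _ _) (norm_mul_le _ _)) (norm_mul_le _ _)
    _ ≤ ‖a - p‖ * ‖a - p‖ + ‖a - p‖ * 1 + 1 * ‖a - p‖ := by
        gcongr
        exacts [hp.norm_le, hp.one_sub.norm_le]
    _ = ‖a - p‖ * (‖a - p‖ + 2) := by ring

variable {A : Type*} [CStarAlgebra A] {S : StarSubalgebra ℂ A}

theorem exists_isStarProjection_mem_norm_sub_lt_half (hS : IsClosed (S : Set A)) {a : A}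
    (haS : a ∈ S) (ha : IsSelfAdjoint a) (h : ‖a * a - a‖ < 1 / 4) :
    ∃ e ∈ S, IsStarProjection e ∧ ‖e - a‖ < 1 / 2 := by
  have hspec (x : ℝ) (hx : x ∈ spectrum ℝ a) : |x * x - x| < 1 / 4 := by
    have hcfc : cfc (fun x : ℝ ↦ x * x - x) a = a * a - a := by
      rw [cfc_sub (fun x : ℝ ↦ x * x) (fun x ↦ x) a, cfc_mul (fun x : ℝ ↦ x) (fun x ↦ x) a,
        cfc_id' ℝ a]
    exact (norm_apply_le_norm_cfc (fun x : ℝ ↦ x * x - x) a hx).trans_lt (hcfc ▸ h)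
  let χ : ℝ → ℝ := (Set.Ioi (1 / 2)).indicator 1
  have hχ : ContinuousOn χ (spectrum ℝ a) := by
    intro x hx
    refine (continuousOn_const.continuousAt_indicator ?_).continuousWithinAt
    rw [frontier_Ioi, Set.mem_singleton_iff]
    rintro rfl
    have := hspec _ hx
    norm_num at this
  refine ⟨cfc χ a, cfc_mem (𝕜' := ℂ) (hs := hS) χ haS, ?_, ?_⟩
  · rw [isStarProjection_iff_spectrum_subset_and_isSelfAdjoint, cfc_map_spectrum χ a]
    refine ⟨?_, cfc_predicate χ a⟩
    rintro _ ⟨x, -, rfl⟩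
    exact (Set.indicator_eq_zero_or_self _ _ x).imp id id
  · have hsub : cfc χ a - a = cfc (fun x ↦ χ x - x) a := by
      rw [cfc_sub χ (fun x ↦ x) a, cfc_id' ℝ a]
    rw [hsub]
    refine norm_cfc_lt one_half_pos fun x hx ↦ ?_
    obtain ⟨h₁, h₂⟩ := abs_lt.1 (hspec x hx)
    rw [Real.norm_eq_abs, abs_lt, show χ x = _ from Set.indicator_apply ..]
    split_ifs with hx' <;> simp only [Set.mem_Ioi, Pi.one_apply] at hx' ⊢ <;> constructor <;>
      nlinarith

theorem exists_isStarProjection_mem_norm_sub_lt_one (hS : IsClosed (S : Set A)) {p b : A}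
    (hp : IsStarProjection p) (hb : b ∈ S) (hbp : ‖b - p‖ < 1 / 9) :
    ∃ e ∈ S, IsStarProjection e ∧ ‖p - e‖ < 1 := by
  let a : A := realPart b
  have haS : a ∈ S := by
    rw [show a = (2⁻¹ : ℝ) • (b + star b) from realPart_apply_coe b, ← Complex.coe_smul]
    exact S.smul_mem (add_mem hb (star_mem hb)) _
  have hap : ‖a - p‖ < 1 / 9 := by
    have hcoe : a - p = realPart (b - p) := by
      rw [map_sub, AddSubgroup.coe_sub, hp.isSelfAdjoint.coe_realPart]
    rw [hcoe]
    exact (realPart.norm_le (b - p)).trans_lt hbp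
  have haa : ‖a * a - a‖ < 1 / 4 := by
    refine (norm_mul_self_sub_self_le hp a).trans_lt ?_
    nlinarith [norm_nonneg (a - p)]
  obtain ⟨e, heS, he, hea⟩ :=
    exists_isStarProjection_mem_norm_sub_lt_half hS haS (realPart b).property haa
  refine ⟨e, heS, he, ?_⟩
  linarith [norm_sub_le_norm_sub_add_norm_sub p a e, norm_sub_rev p a, norm_sub_rev a e]

end Approximation

section MatrixAlgebra

variable {n : Type*} [Fintype n]

theorem sum_single_mul_mul_single [DecidableEq n] {R : Type*} [Semiring R] (M : Matrix n n R) :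
    ∑ i, ∑ j, single i j 1 * M * single j i 1 = M.trace • (1 : Matrix n n R) := by
  have hterm (i j : n) :
      single i j 1 * M * single j i 1 = M j j • (single i i 1 : Matrix n n R) := by
    rw [single_mul_mul_single, one_mul, mul_one, smul_single, smul_eq_mul, mul_one]
  simp only [hterm, ← Finset.sum_smul, ← Finset.smul_sum, sum_single_one, trace, diag_apply]

theorem card_smul_apply_eq_trace_smul_apply_one [DecidableEq n] {R V : Type*} [CommSemiring R]
    [AddCommMonoid V] [Module R V] (t : Matrix n n R →ₗ[R] V) (ht : ∀ a b, t (a * b) = t (b * a))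
    (M : Matrix n n R) : Fintype.card n • t M = M.trace • t 1 := by
  have hterm (i j : n) : t (single i j 1 * M * single j i 1) = t (M * single j j 1) := by
    rw [mul_assoc, ht, mul_assoc, single_mul_single_same, one_mul]
  calc Fintype.card n • t M = ∑ _i : n, ∑ j, t (M * single j j 1) := by
        rw [← map_sum, ← Finset.mul_sum, sum_single_one, mul_one, Finset.sum_const,
          Finset.card_univ]
    _ = ∑ i, ∑ j, t (single i j 1 * M * single j i 1) := by simp only [hterm]
    _ = M.trace • t 1 := by simp only [← map_sum, sum_single_mul_mul_single, map_smul]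

theorem submatrix_mul_submatrix_coe {l m R : Type*} [Semiring R] [DecidableEq n] (s : Finset n)
    (M : Matrix l n R) (N : Matrix n m R) :
    M.submatrix id ((↑) : s → n) * N.submatrix ((↑) : s → n) id
      = M * diagonal (fun i ↦ if i ∈ s then (1 : R) else 0) * N := by
  ext i j
  rw [mul_apply, mul_apply]
  simp only [mul_diagonal, submatrix_apply, id, mul_ite, mul_one, mul_zero, ite_mul, zero_mul,
    Finset.sum_ite_mem, Finset.univ_inter]
  exact Finset.sum_coe_sort s fun k ↦ M i k * N k j

variable {𝕜 : Type*} [RCLike 𝕜]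

theorem exists_conjTranspose_mul_eq_one_mul_conjTranspose_eq [DecidableEq n] {e : Matrix n n 𝕜}
    (he : IsStarProjection e) :
    ∃ (s : Finset n) (V : Matrix n s 𝕜), Vᴴ * V = 1 ∧ V * Vᴴ = e := by
  have hherm : e.IsHermitian := he.isSelfAdjoint
  let U : Matrix n n 𝕜 := hherm.eigenvectorUnitary
  let s : Finset n := {i | hherm.eigenvalues i = 1}
  have hdiag : (diagonal (RCLike.ofReal ∘ hherm.eigenvalues) : Matrix n n 𝕜)
      = diagonal fun i ↦ if i ∈ s then 1 else 0 := by
    congr 1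
    ext i
    have h01 : hherm.eigenvalues i = 0 ∨ hherm.eigenvalues i = 1 :=
      he.isIdempotentElem.spectrum_subset ℝ (hherm.eigenvalues_mem_spectrum_real i)
    rcases h01 with h | h <;> simp [s, h]
  refine ⟨s, U.submatrix id (↑), ?_, ?_⟩
  · rw [conjTranspose_submatrix, ← submatrix_mul _ _ _ id _ Function.bijective_id,
      ← star_eq_conjTranspose, Unitary.coe_star_mul_self, submatrix_one _ Subtype.val_injective]
  · rw [conjTranspose_submatrix, submatrix_mul_submatrix_coe, ← hdiag, ← star_eq_conjTranspose]
    exact hherm.spectral_theorem.symm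

theorem murrayVonNeumannEquiv_of_trace_eq {e f : Matrix n n 𝕜} (he : IsStarProjection e)
    (hf : IsStarProjection f) (h : e.trace = f.trace) : MurrayVonNeumannEquiv e f := by
  classical
  obtain ⟨s, V, hV, rfl⟩ := exists_conjTranspose_mul_eq_one_mul_conjTranspose_eq he
  obtain ⟨t, W, hW, rfl⟩ := exists_conjTranspose_mul_eq_one_mul_conjTranspose_eq hf
  have hcard : Fintype.card s = Fintype.card t := by
    rw [trace_mul_comm, hV, trace_one, trace_mul_comm, hW, trace_one] at h
    exact_mod_cast h
  let σ : s ≃ t := Fintype.equivOfCardEq hcard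
  set Wσ : Matrix n s 𝕜 := W.submatrix id σ with hWσ_def
  have hWσ : Wσᴴ * Wσ = 1 := by
    rw [hWσ_def, conjTranspose_submatrix, ← submatrix_mul _ _ σ id σ Function.bijective_id, hW,
      submatrix_one_equiv]
  have hrange : Wσ * Wσᴴ = W * Wᴴ := by
    rw [hWσ_def, conjTranspose_submatrix, submatrix_mul_equiv, submatrix_id_id]
  have hstar : star (V * Wσᴴ) = Wσ * Vᴴ := by
    rw [star_eq_conjTranspose, conjTranspose_mul, conjTranspose_conjTranspose]
  refine ⟨V * Wσᴴ, ?_, ?_⟩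
  · rw [hstar, Matrix.mul_assoc, ← Matrix.mul_assoc Wσᴴ, hWσ, Matrix.one_mul]
  · rw [hstar, Matrix.mul_assoc, ← Matrix.mul_assoc Vᴴ, hV, Matrix.one_mul, hrange]

theorem murrayVonNeumannEquiv_of_apply_eq_of_starAlgEquiv_matrix {B V : Type*} [Ring B]
    [StarRing B] [Algebra 𝕜 B] [AddCommGroup V] [Module 𝕜 V] (φ : B ≃⋆ₐ[𝕜] Matrix n n 𝕜)
    (τ : B →ₗ[𝕜] V) (hτ1 : τ 1 ≠ 0) (hτ : ∀ a b, τ (a * b) = τ (b * a)) {e f : B}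
    (he : IsStarProjection e) (hf : IsStarProjection f) (h : τ e = τ f) :
    MurrayVonNeumannEquiv e f := by
  classical
  have htrace (b : B) : (φ b).trace • τ 1 = Fintype.card n • τ b := by
    simpa using (card_smul_apply_eq_trace_smul_apply_one
      (τ ∘ₗ (φ.symm : Matrix n n 𝕜 →ₗ[𝕜] B)) (fun a b ↦ by simp [hτ (φ.symm a)]) (φ b)).symm
  have htr : (φ e).trace = (φ f).trace :=
    smul_left_injective 𝕜 hτ1 (by simp only [htrace, h])
  simpa using (murrayVonNeumannEquiv_of_trace_eq (he.map φ) (hf.map φ) htr).map φ.symm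

end MatrixAlgebra

theorem isClosed_of_starAlgEquiv_matrix {𝕜 A n : Type*} [RCLike 𝕜] [NormedRing A]
    [NormedAlgebra 𝕜 A] [StarRing A] [StarModule 𝕜 A] [Fintype n] {S : StarSubalgebra 𝕜 A}
    (φ : S ≃⋆ₐ[𝕜] Matrix n n 𝕜) : IsClosed (S : Set A) := by
  have : FiniteDimensional 𝕜 S := .of_surjective (φ.symm : Matrix n n 𝕜 →ₗ[𝕜] S) φ.symm.surjective
  exact (Subalgebra.toSubmodule S.toSubalgebra).closed_of_finiteDimensional

theorem exists_isStarProjection_mem_murrayVonNeumannEquiv {A ι : Type*} [CStarAlgebra A]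
    {S : ι → StarSubalgebra ℂ A} (hS : ∀ i, IsClosed (S i : Set A))
    (hdense : Dense (⋃ i, (S i : Set A))) {p : A} (hp : IsStarProjection p) :
    ∃ i, ∃ e ∈ S i, IsStarProjection e ∧ MurrayVonNeumannEquiv p e := by
  obtain ⟨b, hb, hpb⟩ := hdense.exists_dist_lt p (ε := 1 / 9) (by norm_num)
  obtain ⟨i, hbi⟩ := Set.mem_iUnion.1 hb
  rw [dist_comm, dist_eq_norm] at hpb
  obtain ⟨e, heS, he, hpe⟩ := exists_isStarProjection_mem_norm_sub_lt_one (hS i) hp hbi hpb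
  exact ⟨i, e, heS, he, murrayVonNeumannEquiv_of_norm_sub_lt_one hp he hpe⟩

theorem uhf_trace_factor_like_general {A V ι : Type*} [CStarAlgebra A] [AddCommGroup V]
    [Module ℂ V] {n : ι → Type*} [∀ i, Fintype (n i)] {S : ι → StarSubalgebra ℂ A}
    (hS : Directed (· ≤ ·) S) (hiso : ∀ i, Nonempty (S i ≃⋆ₐ[ℂ] Matrix (n i) (n i) ℂ))
    (hdense : Dense (⋃ i, (S i : Set A))) (τ : A →ₗ[ℂ] V) (hτ1 : τ 1 ≠ 0)
    (hτ : ∀ a b, τ (a * b) = τ (b * a)) {p q : A} (hp : IsStarProjection p)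
    (hq : IsStarProjection q) (hpq : τ p = τ q) : MurrayVonNeumannEquiv p q := by
  have hclosed (i : ι) : IsClosed (S i : Set A) := (hiso i).elim isClosed_of_starAlgEquiv_matrix
  obtain ⟨i, e, hei, he, hpe⟩ := exists_isStarProjection_mem_murrayVonNeumannEquiv hclosed hdense hp
  obtain ⟨j, f, hfj, hf, hqf⟩ := exists_isStarProjection_mem_murrayVonNeumannEquiv hclosed hdense hq
  obtain ⟨k, hik, hjk⟩ := hS i j
  obtain ⟨φ⟩ := hiso k
  have hef : τ e = τ f := by rw [← hpe.apply_eq hτ, hpq, hqf.apply_eq hτ]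
  let e' : S k := ⟨e, hik hei⟩
  let f' : S k := ⟨f, hjk hfj⟩
  have hef' : MurrayVonNeumannEquiv e' f' :=
    murrayVonNeumannEquiv_of_apply_eq_of_starAlgEquiv_matrix φ
      (τ ∘ₗ (S k).subtype.toAlgHom.toLinearMap) hτ1 (fun a b ↦ hτ a b)
      ⟨Subtype.ext he.isIdempotentElem, Subtype.ext he.isSelfAdjoint⟩
      ⟨Subtype.ext hf.isIdempotentElem, Subtype.ext hf.isSelfAdjoint⟩ hef
  have hpf := hpe.trans (hef'.map (S k).subtype) hp.isIdempotentElem hf.isIdempotentElem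
  exact hpf.trans hqf.symm hp.isIdempotentElem hq.isIdempotentElem

/-- In a unital C*-algebra admitting a matricial chain (i.e. a UHF algebra),
any two projections with the same value under a tracial state are Murray–von Neumann
equivalent. -/
theorem uhf_trace_factor_like
    {A : Type*} [CStarAlgebra A]
    (n : ℕ → ℕ) (Ak : ℕ → StarSubalgebra ℂ A)
    (hpos : ∀ k, 0 < n k)
    (hmono : ∀ k, Ak k ≤ Ak (k + 1))
    (hiso : ∀ k, Nonempty ((Ak k) ≃⋆ₐ[ℂ] Matrix (Fin (n k)) (Fin (n k)) ℂ))
    (hdense : Dense (⋃ k, (Ak k : Set A)))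
    (τ : A →ₗ[ℂ] ℂ)
    (hτ1 : τ 1 = 1)
    (hτtr : ∀ a b : A, τ (a * b) = τ (b * a))
    (hτpos : ∀ a : A, ∃ r : ℝ, 0 ≤ r ∧ τ (star a * a) = (r : ℂ))
    (p q : A)
    (hp : star p = p ∧ p * p = p)
    (hq : star q = q ∧ q * q = q)
    (hτpq : τ p = τ q) :
    ∃ v : A, p = v * star v ∧ q = star v * v :=
  uhf_trace_factor_like_general (monotone_nat_of_le_succ hmono).directed_le hiso hdense τ
    (hτ1 ▸ one_ne_zero) hτtr ⟨hp.2, hp.1⟩ ⟨hq.2, hq.1⟩ hτpq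
end

section
/- For every n ≥ 1 and every ε > 0 there exists δ > 0 with the following property: for every unital C*-algebra A and every family (a_{r,s})_{r,s ∈ Fin n} of elements of A satisfying ‖star(a_{r,s}) − a_{s,r}‖ < δ, ‖a_{r,s}·a_{r',s'} − (if s = r' then a_{r,s'} else 0)‖ < δ, ‖a_{r,s}‖ < 1 + δ for all indices, and ‖1_A − Σ_r a_{r,r}‖ < δ, there exists an n×n system of matrix units (b_{r,s})_{r,s ∈ Fin n} in A with Σ_r b_{r,r} = 1_A and ‖a_{r,s} − b_{r,s}‖ < ε for all r, s. (That is, the relations defining an n×n system of matrix units whose diagonal sums to the unit are weakly stable, uniformly over all unital C*-algebras.) -/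
/-!
The whole system is rebuilt from one column, with index `o`. Let `p` be a projection close to
`a o o`, and put `x r = a r o * p`. Then `c = ∑ r, x r * star (x r)` is close to `∑ r, a r r`, hence
to `1`, so `v r = c ^ (-1/2) * x r` satisfies `∑ r, v r * star (v r) = 1` exactly. This makes the
matrix with entries `star (v r) * v s` an idempotent below `p ⊗ 1`; the difference of the two is an
idempotent of small norm, hence zero. So `star (v r) * v s = δ_{rs} p`, and
`b r s = v r * star (v s)` works.
-/

open Finset

section NormedRing

variable {R : Type*}

lemma norm_mul_sub_le_of_le [NonUnitalSeminormedRing R] {x y a b c : R} {α β γ M N : ℝ}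
    (hxa : ‖x - a‖ ≤ α) (hy : ‖y‖ ≤ M) (ha : ‖a‖ ≤ N) (hyb : ‖y - b‖ ≤ β)
    (hab : ‖a * b - c‖ ≤ γ) : ‖x * y - c‖ ≤ α * M + N * β + γ := by
  have hsplit : x * y - c = (x - a) * y + a * (y - b) + (a * b - c) := by noncomm_ring
  rw [hsplit]
  exact norm_add₃_le.trans <| add_le_add_three (norm_mul_le_of_le hxa hy)
    (norm_mul_le_of_le ha hyb) hab

lemma eq_zero_of_isIdempotentElem_of_norm_lt_one [NonUnitalNormedRing R] {e : R}
    (he : IsIdempotentElem e) (hlt : ‖e‖ < 1) : e = 0 := by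
  have hle : ‖e‖ ≤ ‖e‖ * ‖e‖ := by simpa only [he.eq] using norm_mul_le e e
  exact norm_eq_zero.mp (by nlinarith [norm_nonneg e])

variable {ι : Type*} [Fintype ι]

lemma matrix_eq_zero_of_isIdempotentElem_of_norm_le [NonUnitalNormedRing R] {D : Matrix ι ι R}
    {ε : ℝ} (hD : IsIdempotentElem D) (hle : ∀ r s, ‖D r s‖ ≤ ε) (hε : Fintype.card ι * ε < 1) :
    D = 0 := by
  let : NonUnitalNormedRing (Matrix ι ι R) := Matrix.linftyOpNonUnitalNormedRing
  refine eq_zero_of_isIdempotentElem_of_norm_lt_one hD ?_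
  rw [Matrix.linfty_opNorm_def, ← NNReal.coe_one, NNReal.coe_lt_coe,
    Finset.sup_lt_iff zero_lt_one]
  intro r _
  rw [← NNReal.coe_lt_coe, NNReal.coe_sum, NNReal.coe_one]
  calc ∑ s, (‖D r s‖₊ : ℝ) ≤ #(univ : Finset ι) • ε := sum_le_card_nsmul _ _ _ fun s _ ↦ hle r s
    _ = Fintype.card ι * ε := by rw [card_univ, nsmul_eq_mul]
    _ < 1 := hε

variable [DecidableEq ι]

theorem star_mul_eq_ite_of_norm_sub_le [NormedRing R] [StarRing R] {v : ι → R} {p : R} {ε : ℝ}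
    (hp : IsStarProjection p) (hvp : ∀ r, v r * p = v r) (hv : ∑ r, v r * star (v r) = 1)
    (hle : ∀ r s, ‖star (v r) * v s - (if r = s then p else 0)‖ ≤ ε) (hε : Fintype.card ι * ε < 1)
    (r s : ι) : star (v r) * v s = if r = s then p else 0 := by
  let P : Matrix ι ι R := Matrix.diagonal fun _ ↦ p
  let Q : Matrix ι ι R := Matrix.of fun r s ↦ star (v r) * v s
  have hpv (r : ι) : p * star (v r) = star (v r) := by
    rw [← hp.isSelfAdjoint.star_eq, ← star_mul, hvp]
  have hPP : IsIdempotentElem P := by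
    simp only [P, IsIdempotentElem, Matrix.diagonal_mul_diagonal, hp.isIdempotentElem.eq]
  have hPQ : P * Q = Q := by
    ext r s
    simp only [P, Q, Matrix.diagonal_mul, Matrix.of_apply, ← mul_assoc, hpv]
  have hQP : Q * P = Q := by
    ext r s
    simp only [P, Q, Matrix.mul_diagonal, Matrix.of_apply, mul_assoc, hvp]
  have hQQ : IsIdempotentElem Q := by
    ext r s
    calc ∑ t, star (v r) * v t * (star (v t) * v s)
        = star (v r) * (∑ t, v t * star (v t)) * v s := by
          simp only [mul_sum, sum_mul, mul_assoc]
      _ = star (v r) * v s := by rw [hv, mul_one]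
  have hzero : P - Q = 0 := by
    refine matrix_eq_zero_of_isIdempotentElem_of_norm_le (hQQ.sub hPP hQP hPQ) (fun r s ↦ ?_) hε
    simpa only [P, Q, Matrix.sub_apply, Matrix.diagonal_apply, Matrix.of_apply, norm_sub_rev]
      using hle r s
  exact (congrFun₂ (sub_eq_zero.mp hzero) r s).symm

end NormedRing

section FunctionalCalculus

variable {A : Type*} [CStarAlgebra A]

theorem exists_isStarProjection_norm_sub_le_of_isSelfAdjoint {h : A} {δ : ℝ} (hh : IsSelfAdjoint h)
    (hle : ‖h * h - h‖ ≤ δ) (hδ : δ < 1 / 4) :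
    ∃ p : A, IsStarProjection p ∧ ‖p - h‖ ≤ 2 * δ := by
  let χ : ℝ → ℝ := fun t ↦ if 1 / 2 < t then 1 else 0
  have hspec (t : ℝ) (ht : t ∈ spectrum ℝ h) : |t * t - t| ≤ δ := by
    have hnorm := norm_apply_le_norm_cfc (fun t : ℝ ↦ t * t - t) h ht
    rw [cfc_sub _ _ h, cfc_mul _ _ h, cfc_id' ℝ h] at hnorm
    exact hnorm.trans hle
  -- `χ` jumps only at `1 / 2`, where `|t * t - t| = 1 / 4`, so outside the spectrum.
  have hχ : ContinuousOn χ (spectrum ℝ h) := by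
    refine ContinuousOn.if (fun t ⟨ht, htf⟩ ↦ ?_) continuousOn_const continuousOn_const
    have hthalf : t = 1 / 2 := by
      simpa only [Set.Ioi_def, frontier_Ioi, Set.mem_singleton_iff] using htf
    have hquarter := hspec t ht
    rw [hthalf, show |(1 / 2 * (1 / 2) - 1 / 2 : ℝ)| = 1 / 4 by norm_num [abs_of_neg]] at hquarter
    linarith
  refine ⟨cfc χ h, ⟨?_, IsSelfAdjoint.cfc⟩, ?_⟩
  · rw [IsIdempotentElem, ← cfc_mul χ χ h]
    refine cfc_congr fun t _ ↦ ?_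
    dsimp only [χ]
    split_ifs <;> norm_num
  · nth_rw 2 [← cfc_id' ℝ h]
    rw [← cfc_sub χ _ h]
    refine norm_cfc_le (by linarith [(norm_nonneg _).trans hle]) fun t ht ↦ ?_
    have hδt := abs_le.mp (hspec t ht)
    rw [Real.norm_eq_abs, abs_le]
    dsimp only [χ]
    split_ifs with hthalf <;> constructor <;> nlinarith

theorem exists_isStarProjection_norm_sub_le {x : A} {δ : ℝ} (hstar : ‖star x - x‖ ≤ δ)
    (hmul : ‖x * x - x‖ ≤ δ) (hx : ‖x‖ ≤ 2) (hδ : 15 * δ ≤ 1) :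
    ∃ p : A, IsStarProjection p ∧ ‖p - x‖ ≤ 8 * δ := by
  let h : A := realPart x
  have hhx : ‖h - x‖ ≤ δ / 2 := by
    have hsub : h - x = (2⁻¹ : ℝ) • (star x - x) := by
      simp only [h, realPart_apply_coe]
      module
    rw [hsub, norm_smul, show ‖(2⁻¹ : ℝ)‖ = 2⁻¹ by norm_num]
    linarith
  have hh : ‖h‖ ≤ 2 := (realPart.norm_le x).trans hx
  have hhh : ‖h * h - x‖ ≤ 3 * δ :=
    (norm_mul_sub_le_of_le hhx hh hx hhx hmul).trans_eq (by ring)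
  have hidem : ‖h * h - h‖ ≤ 7 / 2 * δ := by
    linarith [norm_sub_le_norm_sub_add_norm_sub (h * h) x h, norm_sub_rev h x]
  have hδ0 : 0 ≤ δ := (norm_nonneg _).trans hstar
  obtain ⟨p, hp, hph⟩ :=
    exists_isStarProjection_norm_sub_le_of_isSelfAdjoint (realPart x).2 hidem (by linarith)
  exact ⟨p, hp, by linarith [norm_sub_le_norm_sub_add_norm_sub p h x]⟩

lemma abs_inv_sqrt_sub_one_le {t : ℝ} (ht : 1 / 2 ≤ t) : |(√t)⁻¹ - 1| ≤ |t - 1| := by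
  have hsq : √t ^ 2 = t := Real.sq_sqrt (by linarith)
  have hpos : 0 < √t := Real.sqrt_pos.mpr (by linarith)
  have hfactor : t - 1 = ((√t)⁻¹ - 1) * -(√t * (1 + √t)) := by
    field_simp
    linear_combination -hsq
  have hone : 1 ≤ |-(√t * (1 + √t))| := by
    rw [abs_neg, abs_of_pos (by positivity)]
    nlinarith
  rw [hfactor, abs_mul]
  exact le_mul_of_one_le_right (abs_nonneg _) hone

theorem exists_isSelfAdjoint_mul_mul_eq_one {c : A} (hc : IsSelfAdjoint c) (hle : ‖c - 1‖ ≤ 1 / 2) :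
    ∃ w : A, IsSelfAdjoint w ∧ w * c * w = 1 ∧ ‖w - 1‖ ≤ ‖c - 1‖ := by
  have hspec (t : ℝ) (ht : t ∈ spectrum ℝ c) : |t - 1| ≤ ‖c - 1‖ := by
    have hnorm := norm_apply_le_norm_cfc (fun t : ℝ ↦ t - 1) c ht
    rwa [cfc_sub _ _ c, cfc_id' ℝ c, cfc_const_one ℝ c] at hnorm
  have hhalf (t : ℝ) (ht : t ∈ spectrum ℝ c) : 1 / 2 ≤ t := by
    linarith [(abs_le.mp (hspec t ht)).1]
  let f : ℝ → ℝ := fun t ↦ (√t)⁻¹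
  have hf : ContinuousOn f (spectrum ℝ c) := Real.continuous_sqrt.continuousOn.inv₀ fun t ht ↦
    (Real.sqrt_pos.mpr (by linarith [hhalf t ht])).ne'
  refine ⟨cfc f c, IsSelfAdjoint.cfc, ?_, ?_⟩
  · nth_rw 2 [← cfc_id' ℝ c]
    rw [← cfc_mul f _ c, ← cfc_mul _ f c, ← cfc_const_one ℝ c]
    refine cfc_congr fun t ht ↦ ?_
    have hsqrt : √t * √t = t := Real.mul_self_sqrt (by linarith [hhalf t ht])
    have hpos : 0 < √t := Real.sqrt_pos.mpr (by linarith [hhalf t ht])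
    calc (√t)⁻¹ * t * (√t)⁻¹ = (√t)⁻¹ * (√t * √t) * (√t)⁻¹ := by rw [hsqrt]
      _ = 1 := by field_simp
  · rw [← cfc_const_one ℝ c, ← cfc_sub f _ c, cfc_const_one ℝ c]
    exact norm_cfc_le (norm_nonneg _) fun t ht ↦
      (abs_inv_sqrt_sub_one_le (hhalf t ht)).trans (hspec t ht)

theorem exists_sum_mul_star_eq_one {ι : Type*} [Fintype ι] {x : ι → A}
    (hle : ‖∑ r, x r * star (x r) - 1‖ ≤ 1 / 2) :
    ∃ w : A, ‖w - 1‖ ≤ ‖∑ r, x r * star (x r) - 1‖ ∧ ∑ r, w * x r * star (w * x r) = 1 := by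
  have hsa : IsSelfAdjoint (∑ r, x r * star (x r)) :=
    isSelfAdjoint_sum _ fun r _ ↦ IsSelfAdjoint.mul_star_self (x r)
  obtain ⟨w, hw, hwcw, hw1⟩ := exists_isSelfAdjoint_mul_mul_eq_one hsa hle
  refine ⟨w, hw1, ?_⟩
  rw [← hwcw, mul_sum, sum_mul]
  simp only [star_mul, hw.star_eq, mul_assoc]

end FunctionalCalculus

section MatrixUnits

variable {ι : Type*} [Fintype ι] [DecidableEq ι]

/-- A system of matrix units indexed by `ι` whose diagonal sums to the unit. -/
structure IsMatrixUnits {R : Type*} [Semiring R] [Star R] (b : ι → ι → R) : Prop where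
  star_eq : ∀ r s, star (b r s) = b s r
  mul_eq : ∀ r s r' s', b r s * b r' s' = if s = r' then b r s' else 0
  sum_diag : ∑ r, b r r = 1

/-- An approximate system of matrix units: the relations of `IsMatrixUnits` hold up to errors of
norm at most `δ`. The inequalities are not strict, so that `δ = 0` describes exact systems. -/
structure IsApproxMatrixUnits {R : Type*} [NormedRing R] [Star R] (δ : ℝ) (a : ι → ι → R) :
    Prop where
  norm_star_sub_le : ∀ r s, ‖star (a r s) - a s r‖ ≤ δ
  norm_mul_sub_le : ∀ r s r' s', ‖a r s * a r' s' - (if s = r' then a r s' else 0)‖ ≤ δ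
  norm_one_sub_sum_le : ‖1 - ∑ r, a r r‖ ≤ δ

theorem isMatrixUnits_mul_star {R : Type*} [Semiring R] [StarRing R] {v : ι → R} {p : R}
    (hvp : ∀ r, v r * p = v r) (horth : ∀ r s, star (v r) * v s = if r = s then p else 0)
    (hsum : ∑ r, v r * star (v r) = 1) : IsMatrixUnits fun r s ↦ v r * star (v s) where
  star_eq r s := by rw [star_mul, star_star]
  mul_eq r s r' s' := by
    calc v r * star (v s) * (v r' * star (v s')) = v r * (star (v s) * v r') * star (v s') := by
          simp only [mul_assoc]
      _ = if s = r' then v r * star (v s') else 0 := by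
          rw [horth]
          split_ifs <;> simp only [hvp, mul_zero, zero_mul]
  sum_diag := hsum

variable {A : Type*} [CStarAlgebra A] {δ η : ℝ} {a : ι → ι → A} {o : ι} {p : A} {x : ι → A}

namespace IsApproxMatrixUnits

lemma nonneg (ha : IsApproxMatrixUnits δ a) : 0 ≤ δ := (norm_nonneg _).trans ha.norm_one_sub_sum_le

lemma norm_mul_sub_le_of_eq (ha : IsApproxMatrixUnits δ a) (r s t : ι) :
    ‖a r s * a s t - a r t‖ ≤ δ := by
  simpa only [if_true] using ha.norm_mul_sub_le r s s t

lemma norm_sq_le (ha : IsApproxMatrixUnits δ a) (r s : ι) :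
    ‖a r s‖ ^ 2 ≤ δ * ‖a r s‖ + ‖a s s‖ + δ := by
  have hsplit : star (a r s) * a r s
      = (star (a r s) - a s r) * a r s + (a s r * a r s - a s s) + a s s := by noncomm_ring
  calc ‖a r s‖ ^ 2 = ‖star (a r s) * a r s‖ := by rw [CStarRing.norm_star_mul_self, sq]
    _ ≤ δ * ‖a r s‖ + δ + ‖a s s‖ := by
        rw [hsplit]
        exact norm_add₃_le.trans <| add_le_add_three
          (norm_mul_le_of_le (ha.norm_star_sub_le r s) le_rfl)
          (ha.norm_mul_sub_le_of_eq s r s) le_rfl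
    _ = δ * ‖a r s‖ + ‖a s s‖ + δ := by ring

lemma norm_le_two (ha : IsApproxMatrixUnits δ a) (hδ : δ ≤ 1 / 2) (r s : ι) : ‖a r s‖ ≤ 2 := by
  have hdiag : ‖a s s‖ ≤ 2 := by nlinarith [ha.norm_sq_le s s, norm_nonneg (a s s)]
  nlinarith [ha.norm_sq_le r s, norm_nonneg (a r s)]

lemma norm_mul_sub_le_of_norm_sub_le (ha : IsApproxMatrixUnits δ a) (hδ : δ ≤ 1 / 2)
    (hp : ‖p - a o o‖ ≤ η) (r : ι) : ‖a r o * p - a r o‖ ≤ 2 * η + δ := by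
  have hsplit : a r o * p - a r o = a r o * (p - a o o) + (a r o * a o o - a r o) := by
    noncomm_ring
  rw [hsplit]
  exact norm_add_le_of_le (norm_mul_le_of_le (ha.norm_le_two hδ r o) hp)
    (ha.norm_mul_sub_le_of_eq r o o)

lemma norm_star_sub_le_of_norm_sub_le (ha : IsApproxMatrixUnits δ a)
    (hx : ∀ r, ‖x r - a r o‖ ≤ η) (r : ι) : ‖star (x r) - a o r‖ ≤ η + δ := by
  have hsplit : star (x r) - a o r = star (x r - a r o) + (star (a r o) - a o r) := by
    rw [star_sub, sub_add_sub_cancel]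
  rw [hsplit]
  exact norm_add_le_of_le ((norm_star _).trans_le (hx r)) (ha.norm_star_sub_le r o)

lemma norm_le_three_of_norm_sub_le (ha : IsApproxMatrixUnits δ a) (hδ : δ ≤ 1 / 2) (hη : η ≤ 1)
    (hx : ∀ r, ‖x r - a r o‖ ≤ η) (r : ι) : ‖x r‖ ≤ 3 := by
  linarith [norm_le_norm_add_norm_sub' (x r) (a r o), ha.norm_le_two hδ r o, hx r]

lemma norm_mul_star_sub_le (ha : IsApproxMatrixUnits δ a) (hδ : δ ≤ 1 / 2) (hδη : δ ≤ η)
    (hη : η ≤ 1) (hx : ∀ r, ‖x r - a r o‖ ≤ η) (r s : ι) :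
    ‖x r * star (x s) - a r s‖ ≤ 8 * η := by
  have hstar := (norm_star (x s)).trans_le (ha.norm_le_three_of_norm_sub_le hδ hη hx s)
  have := norm_mul_sub_le_of_le (hx r) hstar (ha.norm_le_two hδ r o)
    (ha.norm_star_sub_le_of_norm_sub_le hx s) (ha.norm_mul_sub_le_of_eq r o s)
  linarith

lemma norm_star_mul_sub_ite_le (ha : IsApproxMatrixUnits δ a) (hδ : δ ≤ 1 / 2) (hδη : δ ≤ η)
    (hη : η ≤ 1) (hp : ‖p - a o o‖ ≤ η) (hx : ∀ r, ‖x r - a r o‖ ≤ η) (r s : ι) :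
    ‖star (x r) * x s - (if r = s then p else 0)‖ ≤ 10 * η := by
  have hstar := ha.norm_star_sub_le_of_norm_sub_le hx r
  have hxs := ha.norm_le_three_of_norm_sub_le hδ hη hx s
  have hmul : ‖a o r * a s o - (if r = s then p else 0)‖ ≤ 2 * η := by
    have hrel := ha.norm_mul_sub_le o r s o
    split_ifs at hrel ⊢
    · linarith [norm_sub_le_norm_sub_add_norm_sub (a o r * a s o) (a o o) p,
        norm_sub_rev p (a o o)]
    · linarith [ha.nonneg]
  have := norm_mul_sub_le_of_le hstar hxs (ha.norm_le_two hδ o r) (hx s) hmul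
  linarith

lemma norm_sum_mul_star_sub_one_le (ha : IsApproxMatrixUnits δ a) (hδ : δ ≤ 1 / 2)
    (hδη : δ ≤ η) (hη : η ≤ 1) (hx : ∀ r, ‖x r - a r o‖ ≤ η) :
    ‖∑ r, x r * star (x r) - 1‖ ≤ 9 * (Fintype.card ι * η) := by
  have hsplit : ∑ r, x r * star (x r) - 1
      = ∑ r, (x r * star (x r) - a r r) - (1 - ∑ r, a r r) := by
    rw [sum_sub_distrib, sub_sub_sub_cancel_right]
  have hterms : ‖∑ r, (x r * star (x r) - a r r)‖ ≤ ∑ _r : ι, 8 * η :=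
    norm_sum_le_of_le _ fun r _ ↦ ha.norm_mul_star_sub_le hδ hδη hη hx r r
  have hcard : (1 : ℝ) ≤ Fintype.card ι := mod_cast Fintype.card_pos_iff.mpr ⟨o⟩
  rw [sum_const, card_univ, nsmul_eq_mul] at hterms
  rw [hsplit]
  nlinarith [norm_sub_le (∑ r, (x r * star (x r) - a r r)) (1 - ∑ r, a r r),
    ha.norm_one_sub_sum_le, ha.nonneg]

lemma exists_sum_mul_star_eq_one_norm_sub_le (ha : IsApproxMatrixUnits δ a)
    (hδ : δ ≤ 1 / 2) (hδη : δ ≤ η) (hη : 18 * (Fintype.card ι * η) ≤ 1)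
    (hx : ∀ r, ‖x r - a r o‖ ≤ η) :
    ∃ w : A, ∑ r, w * x r * star (w * x r) = 1 ∧
      ∀ r, ‖w * x r - a r o‖ ≤ 28 * (Fintype.card ι * η) := by
  have hcard : (1 : ℝ) ≤ Fintype.card ι := mod_cast Fintype.card_pos_iff.mpr ⟨o⟩
  have hη0 : 0 ≤ η := ha.nonneg.trans hδη
  have hηcard : η ≤ Fintype.card ι * η := le_mul_of_one_le_left hη0 hcard
  have hη1 : η ≤ 1 := by linarith
  have hsum := ha.norm_sum_mul_star_sub_one_le hδ hδη hη1 hx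
  obtain ⟨w, hw, hwx⟩ := exists_sum_mul_star_eq_one (hsum.trans (by linarith))
  refine ⟨w, hwx, fun r ↦ ?_⟩
  have hsplit : w * x r - a r o = (w - 1) * x r + (x r - a r o) := by noncomm_ring
  rw [hsplit]
  have := norm_add_le_of_le (norm_mul_le_of_le (hw.trans hsum)
    (ha.norm_le_three_of_norm_sub_le hδ hη1 hx r)) (hx r)
  linarith

/-- With `n = Fintype.card ι`, the column `a r o * p` has error `17 * δ`, and normalizing it raises
this to `η = 28 * 17 * n * δ`. Orthogonality needs `10 * η * n < 1`, whence the `5000`, and the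
resulting system has error `8 * η`, whence the `4000`. -/
theorem exists_isMatrixUnits_norm_sub_le [Nonempty ι] (ha : IsApproxMatrixUnits δ a)
    (hδ : 5000 * (Fintype.card ι ^ 2 * δ) ≤ 1) :
    ∃ b : ι → ι → A, IsMatrixUnits b ∧ ∀ r s, ‖b r s - a r s‖ ≤ 4000 * (Fintype.card ι * δ) := by
  let o : ι := Classical.arbitrary ι
  have hcard : (1 : ℝ) ≤ Fintype.card ι := mod_cast Fintype.card_pos (α := ι)
  have hδ0 : 0 ≤ δ := ha.nonneg
  have hδn : δ ≤ Fintype.card ι * δ := le_mul_of_one_le_left hδ0 hcard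
  have hnn : Fintype.card ι * δ ≤ Fintype.card ι ^ 2 * δ := by nlinarith
  have hδhalf : δ ≤ 1 / 2 := by linarith
  obtain ⟨p, hp, hpa⟩ := exists_isStarProjection_norm_sub_le (ha.norm_star_sub_le o o)
    (ha.norm_mul_sub_le_of_eq o o o) (ha.norm_le_two hδhalf o o) (by linarith)
  have hx (r : ι) : ‖a r o * p - a r o‖ ≤ 17 * δ :=
    (ha.norm_mul_sub_le_of_norm_sub_le hδhalf hpa r).trans_eq (by ring)
  obtain ⟨w, hsum, hv⟩ := ha.exists_sum_mul_star_eq_one_norm_sub_le hδhalf (by linarith)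
    (by linarith) hx
  let v (r : ι) : A := w * (a r o * p)
  have hvp (r : ι) : v r * p = v r := by simp only [v, mul_assoc, hp.isIdempotentElem.eq]
  have hclose (r s : ι) := ha.norm_star_mul_sub_ite_le hδhalf (by linarith) (by linarith)
    (hpa.trans (by linarith)) hv r s
  have horth := star_mul_eq_ite_of_norm_sub_le hp hvp hsum hclose (by nlinarith)
  refine ⟨_, isMatrixUnits_mul_star hvp horth hsum, fun r s ↦ ?_⟩
  have hb := ha.norm_mul_star_sub_le hδhalf (by linarith) (by linarith) hv r s
  linarith

end IsApproxMatrixUnits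

theorem matrix_units_weakly_stable_general (ι : Type*) [Fintype ι] [DecidableEq ι] [Nonempty ι]
    {ε : ℝ} (hε : 0 < ε) :
    ∃ δ : ℝ, 0 < δ ∧ ∀ (A : Type*) [CStarAlgebra A] (a : ι → ι → A), IsApproxMatrixUnits δ a →
      ∃ b : ι → ι → A, IsMatrixUnits b ∧ ∀ r s, ‖a r s - b r s‖ < ε := by
  have hcard : (1 : ℝ) ≤ Fintype.card ι := mod_cast Fintype.card_pos (α := ι)
  set δ : ℝ := min 1 ε / (5000 * Fintype.card ι ^ 2) with hδ
  have hδ0 : 0 < δ := by positivity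
  have hδn : 5000 * (Fintype.card ι ^ 2 * δ) = min 1 ε := by
    rw [hδ]
    field_simp
  refine ⟨δ, hδ0, fun A _ a ha ↦ ?_⟩
  obtain ⟨b, hb, hab⟩ := ha.exists_isMatrixUnits_norm_sub_le (hδn.trans_le (min_le_left 1 ε))
  refine ⟨b, hb, fun r s ↦ ?_⟩
  have hδnε := hδn.trans_le (min_le_right 1 ε)
  rw [norm_sub_rev]
  refine (hab r s).trans_lt ?_
  nlinarith [mul_pos (zero_lt_one.trans_le hcard) hδ0]

end MatrixUnits

/-- The relations defining an `n × n` system of matrix units whose diagonal sums to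
the unit are weakly stable, uniformly over all unital C*-algebras: approximate systems of matrix
units (with approximately summing diagonal) are uniformly close to exact ones. -/
theorem matrix_units_weakly_stable (n : ℕ) (hn : 1 ≤ n) :
    ∀ ε : ℝ, 0 < ε → ∃ δ : ℝ, 0 < δ ∧
      ∀ (A : Type*) [CStarAlgebra A],
        ∀ a : Fin n → Fin n → A,
          (∀ r s, ‖star (a r s) - a s r‖ < δ) →
          (∀ r s r' s', ‖a r s * a r' s' - (if s = r' then a r s' else 0)‖ < δ) →
          (∀ r s, ‖a r s‖ < 1 + δ) →
          ‖(1 : A) - ∑ r, a r r‖ < δ →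
          ∃ b : Fin n → Fin n → A,
            (∀ r s, star (b r s) = b s r) ∧
            (∀ r s r' s', b r s * b r' s' = if s = r' then b r s' else 0) ∧
            (∑ r, b r r) = 1 ∧
            (∀ r s, ‖a r s - b r s‖ < ε) := by
  intro ε hε
  have : Nonempty (Fin n) := Fin.pos_iff_nonempty.mp hn
  obtain ⟨δ, hδ, hstable⟩ := matrix_units_weakly_stable_general (Fin n) hε
  refine ⟨δ, hδ, fun A _ a hstar hmul _ hsum ↦ ?_⟩
  obtain ⟨b, hb, hab⟩ := hstable A a
    ⟨fun r s ↦ (hstar r s).le, fun r s r' s' ↦ (hmul r s r' s').le, hsum.le⟩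
  exact ⟨b, hb.star_eq, hb.mul_eq, hb.sum_diag, hab⟩
end

section
/- Let A be a unital C*-algebra over ℂ admitting a matricial chain (m_k, A_k) and also admitting a matricial chain (n_ℓ, A'_ℓ). Then for every k there exists ℓ such that m_k divides n_ℓ. -/
/-!
A matricial chain carries a bounded normalized trace `τ`: inside a matrix algebra, `1` has distance
at least `1` from the span of the commutators, because the normalized trace is contractive. This
bound passes to the closure of the union, so Hahn-Banach provides a functional that vanishes on
commutators and takes the value `1` at `1`. By uniqueness of the trace, `τ` restricts to the
normalized trace on every unital copy of a matrix algebra. A minimal projection of `M_m` has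
`τ`-value `1 / m`; it is conjugate to a projection of rank `r` in some `M_n` of the chain, which has
`τ`-value `r / n`, so `n = m * r`.
-/

open scoped ComplexStarModule

section Tracial

/-- A map on a monoid or ring is *tracial* if it takes the same value on `x * y` and `y * x`.
It is a predicate on bare functions, so that it applies to linear maps and to continuous functionals
alike. -/
def IsTracial {R S : Type*} [Mul R] (τ : R → S) : Prop :=
  ∀ x y, τ (x * y) = τ (y * x)

lemma IsTracial.eq_of_isConj {R S : Type*} [Monoid R] {τ : R → S} (hτ : IsTracial τ) {a b : R}
    (h : IsConj a b) : τ a = τ b := by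
  obtain ⟨u, hu⟩ := h
  have hb : b = u * (a * ↑u⁻¹) := by rw [← mul_assoc, hu.eq, Units.mul_inv_cancel_right]
  rw [hb, hτ, mul_assoc, Units.inv_mul, mul_one]

lemma isTracial_trace {κ R : Type*} [Fintype κ] [CommSemiring R] :
    IsTracial (Matrix.traceLinearMap κ R R) :=
  Matrix.trace_mul_comm

lemma trace_eq_rank_of_isIdempotentElem {κ K : Type*} [Fintype κ] [Field K] {p : Matrix κ κ K}
    (hp : IsIdempotentElem p) : p.trace = p.rank := by
  classical
  have h : IsIdempotentElem (Matrix.toLin' p) := by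
    rw [IsIdempotentElem, Module.End.mul_eq_comp, ← Matrix.toLin'_mul, hp.eq]
  rw [← Matrix.trace_toLin'_eq, (LinearMap.IsIdempotentElem.isProj_range _ h).trace]
  rfl

variable {κ R A : Type*} [Fintype κ] [DecidableEq κ] [CommRing R] [Ring A] [Algebra R A]

lemma IsTracial.map_mul_card {τ : Matrix κ κ R →ₗ[R] R} (hτ : IsTracial τ) (x : Matrix κ κ R) :
    τ x * Fintype.card κ = x.trace * τ 1 := by
  have off_diag (i j : κ) (hij : i ≠ j) (a : R) : τ (Matrix.single i j a) = 0 := by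
    have h := hτ (Matrix.single i j a) (Matrix.single j j 1)
    rwa [Matrix.single_mul_single_same, mul_one, Matrix.single_mul_single_of_ne _ _ _ _ hij.symm,
      map_zero] at h
  have diag (i j : κ) : τ (Matrix.single i i 1) = τ (Matrix.single j j 1) := by
    simpa only [Matrix.single_mul_single_same, mul_one] using
      hτ (Matrix.single i j 1) (Matrix.single j i 1)
  have sum_diag (y : Matrix κ κ R) : τ y = ∑ i, y i i * τ (Matrix.single i i 1) := by
    conv_lhs => rw [Matrix.matrix_eq_sum_single y]
    simp only [map_sum]
    refine Finset.sum_congr rfl fun i _ => ?_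
    rw [Finset.sum_eq_single i (fun j _ hj => off_diag i j hj.symm _) (by simp), ← smul_eq_mul,
      ← map_smul, Matrix.smul_single, smul_eq_mul, mul_one]
  rcases isEmpty_or_nonempty κ with _ | ⟨⟨j⟩⟩
  · simp
  · have trace_form (y : Matrix κ κ R) : τ y = y.trace * τ (Matrix.single j j 1) := by
      simp only [sum_diag y, diag _ j, ← Finset.sum_mul, Matrix.trace, Matrix.diag_apply]
    rw [trace_form x, trace_form 1, Matrix.trace_one, mul_right_comm, mul_assoc]

lemma IsTracial.map_matrix_mul_card {τ : A →ₗ[R] R} (hτ : IsTracial τ) (h1 : τ 1 = 1)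
    (ρ : Matrix κ κ R →ₐ[R] A) (x : Matrix κ κ R) : τ (ρ x) * Fintype.card κ = x.trace := by
  have hτρ : IsTracial (τ ∘ₗ ρ.toLinearMap) := fun x y => by simp [hτ (ρ x) (ρ y)]
  simpa [h1] using hτρ.map_mul_card x

lemma card_dvd_card_of_isConj {K A κ' : Type*} [Field K] [CharZero K] [Ring A] [Algebra K A]
    [Fintype κ'] [DecidableEq κ'] {τ : A →ₗ[K] K} (hτ : IsTracial τ) (h1 : τ 1 = 1)
    (ρ : Matrix κ κ K →ₐ[K] A) (σ : Matrix κ' κ' K →ₐ[K] A) {j : κ} {p : Matrix κ' κ' K}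
    (hp : IsIdempotentElem p) (hconj : IsConj (ρ (Matrix.single j j 1)) (σ p)) :
    Fintype.card κ ∣ Fintype.card κ' := by
  have hmin : τ (σ p) * Fintype.card κ = 1 := by
    rw [← hτ.eq_of_isConj hconj, hτ.map_matrix_mul_card h1, Matrix.trace_single_eq_same]
  have hrank : τ (σ p) * Fintype.card κ' = p.rank := by
    rw [hτ.map_matrix_mul_card h1, trace_eq_rank_of_isIdempotentElem hp]
  refine ⟨p.rank, Nat.cast_injective (R := K) ?_⟩
  rw [Nat.cast_mul, ← hrank]
  linear_combination (-(Fintype.card κ' : K)) * hmin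

end Tracial

section CommutatorSpan

/-- The linear span of the commutators `x * y - y * x` with `x, y ∈ s`. A linear functional is
tracial exactly if it vanishes on `commutatorSpan R Set.univ`. -/
def commutatorSpan (R : Type*) {A : Type*} [CommRing R] [Ring A] [Algebra R A] (s : Set A) :
    Submodule R A :=
  Submodule.span R (Set.image2 (fun x y => x * y - y * x) s s)

variable {R A : Type*} [CommRing R] [Ring A] [Algebra R A]

lemma commutatorSpan_mono {s t : Set A} (h : s ⊆ t) : commutatorSpan R s ≤ commutatorSpan R t :=
  Submodule.span_mono (Set.image2_subset h h)

lemma sub_mem_commutatorSpan {s : Set A} {x y : A} (hx : x ∈ s) (hy : y ∈ s) :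
    x * y - y * x ∈ commutatorSpan R s :=
  Submodule.subset_span (Set.mem_image2_of_mem hx hy)

lemma commutatorSpan_le_iff {s : Set A} {K : Submodule R A} :
    commutatorSpan R s ≤ K ↔ ∀ x ∈ s, ∀ y ∈ s, x * y - y * x ∈ K :=
  Submodule.span_le.trans Set.image2_subset_iff

lemma commutatorSpan_range_le_map_ker {B M : Type*} [Ring B] [Algebra R B] [AddCommGroup M]
    [Module R M] (ψ : B →ₐ[R] A) {τ : B →ₗ[R] M} (hτ : IsTracial τ) :
    commutatorSpan R (Set.range ψ) ≤ τ.ker.map ψ.toLinearMap := by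
  rw [commutatorSpan_le_iff]
  rintro _ ⟨x, rfl⟩ _ ⟨y, rfl⟩
  exact ⟨x * y - y * x, by simp [hτ x y], by simp⟩

lemma exists_mem_commutatorSpan_of_directed {ι : Type*} [Nonempty ι] {s : ι → Set A}
    (hs : Directed (· ⊆ ·) s) {z : A} (hz : z ∈ commutatorSpan R (⋃ i, s i)) :
    ∃ i, z ∈ commutatorSpan R (s i) := by
  have hdir : Directed (· ≤ ·) fun i => commutatorSpan R (s i) := fun i j =>
    (hs i j).imp fun _ h => ⟨commutatorSpan_mono h.1, commutatorSpan_mono h.2⟩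
  rw [← Submodule.mem_iSup_of_directed _ hdir]
  refine commutatorSpan_le_iff.2 (fun x hx y hy => ?_) hz
  obtain ⟨i, hx⟩ := Set.mem_iUnion.1 hx
  obtain ⟨j, hy⟩ := Set.mem_iUnion.1 hy
  obtain ⟨k, hik, hjk⟩ := hs i j
  exact Submodule.mem_iSup_of_mem k (sub_mem_commutatorSpan (hik hx) (hjk hy))

lemma commutatorSpan_univ_le_topologicalClosure [TopologicalSpace A] [IsTopologicalRing A]
    [ContinuousConstSMul R A] {s : Set A} (hs : Dense s) :
    commutatorSpan R Set.univ ≤ (commutatorSpan R s).topologicalClosure := by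
  refine commutatorSpan_le_iff.2 fun x _ y _ => ?_
  have hcont : Continuous (Function.uncurry fun x y : A => x * y - y * x) := by fun_prop
  exact map_mem_closure₂ (f := fun x y : A => x * y - y * x) hcont (hs x) (hs y)
    fun a ha b hb => sub_mem_commutatorSpan ha hb

end CommutatorSpan

section HahnBanach

variable {𝕜 : Type*} [RCLike 𝕜]

lemma exists_strongDual_eq_one_of_notMem {E : Type*} [NormedAddCommGroup E] [NormedSpace 𝕜 E]
    {K : Submodule 𝕜 E} [IsClosed (K : Set E)] {v : E} (hv : v ∉ K) :
    ∃ f : StrongDual 𝕜 E, f v = 1 ∧ K ≤ f.ker := by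
  have hv' : K.mkQL v ≠ 0 := by simpa using hv
  obtain ⟨g, hg⟩ := SeparatingDual.exists_eq_one (R := 𝕜) hv'
  refine ⟨g.comp K.mkQL, hg, fun x hx => ?_⟩
  rw [LinearMap.mem_ker]
  simp [(Submodule.Quotient.mk_eq_zero K).2 hx]

lemma exists_isTracial_of_one_notMem_topologicalClosure {A : Type*} [NormedRing A]
    [NormedAlgebra 𝕜 A] {s : Set A} (hs : Dense s)
    (h1 : 1 ∉ (commutatorSpan 𝕜 s).topologicalClosure) :
    ∃ τ : StrongDual 𝕜 A, τ 1 = 1 ∧ IsTracial τ := by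
  have := (commutatorSpan 𝕜 s).isClosed_topologicalClosure
  obtain ⟨τ, hτ1, hτ⟩ := exists_strongDual_eq_one_of_notMem h1
  refine ⟨τ, hτ1, fun x y => sub_eq_zero.1 ?_⟩
  rw [← map_sub]
  exact hτ (commutatorSpan_univ_le_topologicalClosure hs
    (sub_mem_commutatorSpan (Set.mem_univ x) (Set.mem_univ y)))

end HahnBanach

section TraceBound

open scoped Matrix.Norms.L2Operator

variable {𝕜 κ : Type*} [RCLike 𝕜] [Fintype κ] [DecidableEq κ]

lemma norm_entry_le_l2_opNorm {κ' : Type*} [Fintype κ'] (x : Matrix κ' κ 𝕜) (i : κ') (j : κ) :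
    ‖x i j‖ ≤ ‖x‖ := by
  simpa using (PiLp.norm_apply_le _ i).trans
    (Matrix.l2_opNorm_mulVec x (EuclideanSpace.single j (1 : 𝕜)))

lemma norm_trace_le_card_mul_l2_opNorm (x : Matrix κ κ 𝕜) :
    ‖x.trace‖ ≤ Fintype.card κ * ‖x‖ := by
  calc ‖x.trace‖ ≤ ∑ i, ‖x i i‖ := norm_sum_le _ _
    _ ≤ ∑ _i : κ, ‖x‖ := Finset.sum_le_sum fun i _ => norm_entry_le_l2_opNorm x i i
    _ = Fintype.card κ * ‖x‖ := by simp

lemma one_le_norm_one_sub_of_trace_eq_zero [Nonempty κ] {x : Matrix κ κ 𝕜} (hx : x.trace = 0) :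
    1 ≤ ‖1 - x‖ := by
  have h := norm_trace_le_card_mul_l2_opNorm (1 - x)
  rw [Matrix.trace_sub, hx, sub_zero, Matrix.trace_one, RCLike.norm_natCast] at h
  exact le_of_mul_le_mul_left (by simpa using h) (Nat.cast_pos.2 Fintype.card_pos)

lemma exists_isTracial_of_dense_iUnion_matrix {A ι : Type*} [CStarAlgebra A] {κ : ι → Type*}
    [∀ i, Fintype (κ i)] [∀ i, DecidableEq (κ i)] [∀ i, Nonempty (κ i)]
    {ψ : ∀ i, Matrix (κ i) (κ i) ℂ →⋆ₐ[ℂ] A} (hψ : ∀ i, Function.Injective (ψ i))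
    (hdir : Directed (· ⊆ ·) fun i => Set.range (ψ i)) (hdense : Dense (⋃ i, Set.range (ψ i))) :
    ∃ τ : StrongDual ℂ A, τ 1 = 1 ∧ IsTracial τ := by
  have : Nonempty ι := (Set.nonempty_iUnion.1 hdense.nonempty).nonempty
  refine exists_isTracial_of_one_notMem_topologicalClosure hdense fun hmem => ?_
  obtain ⟨z, hz, hz1⟩ := Metric.mem_closure_iff.1 hmem 1 one_pos
  obtain ⟨i, hzi⟩ := exists_mem_commutatorSpan_of_directed hdir hz
  obtain ⟨x, hx, rfl⟩ := commutatorSpan_range_le_map_ker (ψ i).toAlgHom isTracial_trace hzi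
  have hnorm : ‖1 - ψ i x‖ = ‖1 - x‖ := by
    rw [← map_one (ψ i), ← map_sub, NonUnitalStarAlgHom.norm_map (ψ i) (hψ i)]
  exact absurd (dist_eq_norm (1 : A) (ψ i x) ▸ hz1)
    (hnorm ▸ (one_le_norm_one_sub_of_trace_eq_zero hx).not_gt)

end TraceBound

section Projection

lemma isConj_of_isUnit_one_sub {R : Type*} [Ring R] {p e : R} (hp : IsIdempotentElem p)
    (he : IsIdempotentElem e) (hu : IsUnit (1 - (2 * p - 1) * (p - e))) : IsConj e p := by
  obtain ⟨u, hu⟩ := hu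
  refine ⟨u, ?_⟩
  have hu' : (u : R) = p * e + (1 - p) * (1 - e) := by
    rw [hu]
    simp only [mul_sub, sub_mul, two_mul, add_mul, hp.eq]
    noncomm_ring
  rw [SemiconjBy, hu', add_mul, mul_add, mul_assoc p, he.eq, ← mul_assoc, hp.eq, mul_assoc (1 - p),
    he.one_sub_mul_self, ← mul_assoc p (1 - p), hp.mul_one_sub_self, mul_zero, zero_mul]

lemma isConj_of_norm_sub_lt_one {A : Type*} [NormedRing A] [CompleteSpace A] [StarRing A]
    [CStarRing A] {p e : A} (hp : IsStarProjection p) (he : IsIdempotentElem e)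
    (h : ‖p - e‖ < 1) : IsConj e p := by
  refine isConj_of_isUnit_one_sub hp.isIdempotentElem he (isUnit_one_sub_of_norm_lt_one ?_)
  rwa [CStarRing.norm_mem_unitary_mul _ hp.two_mul_sub_one_mem_unitary]

lemma exists_isStarProjection_norm_sub_le_s7 {A : Type*} [CStarAlgebra A] {b : A}
    (hb : IsSelfAdjoint b) (h : ‖b * b - b‖ < 1 / 4) :
    ∃ p : A, IsStarProjection p ∧ ‖p - b‖ ≤ 2 * ‖b * b - b‖ := by
  have gap (x : ℝ) (hx : x ∈ spectrum ℝ b) : |x * x - x| ≤ ‖b * b - b‖ := by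
    have hc : cfc (fun x : ℝ => x * x - x) b = b * b - b := by
      rw [cfc_sub (fun x : ℝ => x * x) (fun x => x) b, cfc_mul (fun x : ℝ => x) (fun x => x) b,
        cfc_id' ℝ b]
    rw [← hc]
    exact norm_apply_le_norm_cfc (fun x : ℝ => x * x - x) b hx
  let χ : ℝ → ℝ := fun x => if x ≤ 1 / 2 then 0 else 1
  have hχ : ContinuousOn χ (spectrum ℝ b) := by
    refine ContinuousOn.if ?_ continuousOn_const continuousOn_const
    rintro x ⟨hx, hx'⟩
    obtain rfl : x = 1 / 2 := (frontier_Iic (a := (1 / 2 : ℝ))).le hx'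
    exact absurd ((gap _ hx).trans_lt h) (by norm_num [abs_of_neg])
  refine ⟨cfc χ b, ⟨?_, cfc_predicate χ b⟩, ?_⟩
  · rw [IsIdempotentElem, ← cfc_mul χ χ b]
    congr 1
    funext x
    simp [χ]
  · have hsub : cfc χ b - b = cfc (fun x => χ x - x) b := by
      rw [cfc_sub χ (fun x => x) b, cfc_id' ℝ b]
    rw [hsub]
    refine norm_cfc_le (by positivity) fun x hx => ?_
    refine le_trans ?_ (mul_le_mul_of_nonneg_left (gap x hx) zero_le_two)
    have hfac : |x * x - x| = |x| * |1 - x| := by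
      rw [← abs_mul, abs_sub_comm]; ring_nf
    rw [hfac, Real.norm_eq_abs]
    by_cases hx' : x ≤ 1 / 2
    · simp only [χ, if_pos hx', zero_sub, abs_neg]
      nlinarith [abs_nonneg x, le_abs_self (1 - x)]
    · simp only [χ, if_neg hx']
      nlinarith [abs_nonneg (1 - x), le_abs_self x]

lemma exists_isStarProjection_norm_map_sub_lt_one {A ι : Type*} [CStarAlgebra A] {B : ι → Type*}
    [∀ i, CStarAlgebra (B i)] {ψ : ∀ i, B i →⋆ₐ[ℂ] A} (hψ : ∀ i, Function.Injective (ψ i))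
    (hdense : Dense (⋃ i, Set.range (ψ i))) {e : A} (he : IsStarProjection e) :
    ∃ i, ∃ p : B i, IsStarProjection p ∧ ‖ψ i p - e‖ < 1 := by
  let F (x : A) : ℝ := 2 * ‖(ℜ x * ℜ x - ℜ x : A)‖ + ‖(ℜ x - e : A)‖
  have hF : Continuous F := by
    simp only [F, realPart_apply_coe]
    fun_prop
  have hFe : F e = 0 := by simp [F, he.isSelfAdjoint.coe_realPart, he.isIdempotentElem.eq]
  obtain ⟨x, hx, hFx⟩ := hdense.exists_mem_open (isOpen_Iio.preimage hF)
    ⟨e, show F e < 1 / 2 by rw [hFe]; norm_num⟩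
  obtain ⟨i, y, rfl⟩ := Set.mem_iUnion.1 hx
  have hiso (z : B i) : ‖ψ i z‖ = ‖z‖ := NonUnitalStarAlgHom.norm_map (ψ i) (hψ i) z
  let b : B i := ℜ y
  have hb : (ℜ (ψ i y) : A) = ψ i b := (map_realPart (ψ i) y).symm
  replace hFx : 2 * ‖b * b - b‖ + ‖ψ i b - e‖ < 1 / 2 := by
    simpa only [F, Set.mem_preimage, Set.mem_Iio, hb, ← map_mul, ← map_sub, hiso] using hFx
  obtain ⟨p, hp, hpb⟩ := exists_isStarProjection_norm_sub_le_s7 (ℜ y).2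
    (by linarith [norm_nonneg (ψ i b - e)] : ‖b * b - b‖ < 1 / 4)
  refine ⟨i, p, hp, ?_⟩
  calc ‖ψ i p - e‖ ≤ ‖ψ i p - ψ i b‖ + ‖ψ i b - e‖ := norm_sub_le_norm_sub_add_norm_sub _ _ _
    _ = ‖p - b‖ + ‖ψ i b - e‖ := by rw [← map_sub, hiso]
    _ < 1 := by linarith

end Projection

section Matricial

open scoped Matrix.Norms.L2Operator

lemma exists_starAlgHom_range_eq {R A M : Type*} [CommSemiring R] [StarRing R] [Semiring A]
    [StarRing A] [Algebra R A] [StarModule R A] [Semiring M] [StarRing M] [Algebra R M]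
    {B : StarSubalgebra R A} (e : B ≃⋆ₐ[R] M) :
    ∃ ψ : M →⋆ₐ[R] A, Function.Injective ψ ∧ Set.range ψ = B := by
  refine ⟨B.subtype.comp (e.symm : M →⋆ₐ[R] B), Subtype.val_injective.comp e.symm.injective, ?_⟩
  exact (e.symm.surjective.range_comp Subtype.val).trans Subtype.range_coe

theorem uhf_chain_interleaving_divisibility_general {A ι : Type*} [CStarAlgebra A]
    {m : ℕ} (φ : Matrix (Fin m) (Fin m) ℂ →⋆ₐ[ℂ] A)
    (n : ι → ℕ) (B : ι → StarSubalgebra ℂ A) (hdir : Directed (· ≤ ·) B)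
    (hiso : ∀ i, Nonempty (B i ≃⋆ₐ[ℂ] Matrix (Fin (n i)) (Fin (n i)) ℂ))
    (hdense : Dense (⋃ i, (B i : Set A))) :
    ∃ i, m ∣ n i := by
  by_contra! hndvd
  have hn (i : ι) : NeZero (n i) := ⟨fun h => hndvd i (h ▸ dvd_zero m)⟩
  choose ψ hψ hrange using fun i => exists_starAlgHom_range_eq (hiso i).some
  simp only [← hrange] at hdense
  have hdir' : Directed (· ⊆ ·) fun i => Set.range (ψ i) := by
    simp only [hrange]
    exact hdir
  obtain ⟨τ, hτ1, hτ⟩ := exists_isTracial_of_dense_iUnion_matrix hψ hdir' hdense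
  have : Nontrivial A := ⟨1, 0, fun h => by simp [h] at hτ1⟩
  obtain ⟨j⟩ : Nonempty (Fin m) := not_isEmpty_iff.1 fun _ =>
    not_nontrivial (Matrix (Fin m) (Fin m) ℂ) φ.toRingHom.domain_nontrivial
  have hq : IsStarProjection (Matrix.single j j (1 : ℂ)) :=
    ⟨by simp [IsIdempotentElem], by simp [IsSelfAdjoint, Matrix.star_eq_conjTranspose]⟩
  obtain ⟨i, p, hp, hpq⟩ := exists_isStarProjection_norm_map_sub_lt_one hψ hdense (hq.map φ)
  have hconj := isConj_of_norm_sub_lt_one (hp.map (ψ i)) (hq.map φ).isIdempotentElem hpq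
  refine hndvd i ?_
  simpa using card_dvd_card_of_isConj (τ := τ.toLinearMap) hτ hτ1 φ.toAlgHom (ψ i).toAlgHom
    hp.isIdempotentElem hconj

end Matricial

/-- If a unital C*-algebra admits two matricial chains `(m k, Ak k)` and
`(n ℓ, A'ℓ)`, then every matrix size `m k` of the first chain divides some matrix size `n ℓ`
of the second chain. -/
theorem uhf_chain_interleaving_divisibility
    {A : Type*} [CStarAlgebra A]
    (m : ℕ → ℕ) (Ak : ℕ → StarSubalgebra ℂ A)
    (hmpos : ∀ k, 0 < m k)
    (hmono : ∀ k, Ak k ≤ Ak (k + 1))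
    (hiso : ∀ k, Nonempty ((Ak k) ≃⋆ₐ[ℂ] Matrix (Fin (m k)) (Fin (m k)) ℂ))
    (hdense : Dense (⋃ k, (Ak k : Set A)))
    (n : ℕ → ℕ) (Ak' : ℕ → StarSubalgebra ℂ A)
    (hnpos : ∀ l, 0 < n l)
    (hmono' : ∀ l, Ak' l ≤ Ak' (l + 1))
    (hiso' : ∀ l, Nonempty ((Ak' l) ≃⋆ₐ[ℂ] Matrix (Fin (n l)) (Fin (n l)) ℂ))
    (hdense' : Dense (⋃ l, (Ak' l : Set A))) :
    ∀ k, ∃ l, m k ∣ n l := fun k =>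
  uhf_chain_interleaving_divisibility_general
    ((Ak k).subtype.comp ((hiso k).some.symm : Matrix (Fin (m k)) (Fin (m k)) ℂ →⋆ₐ[ℂ] Ak k))
    n Ak' (monotone_nat_of_le_succ hmono').directed_le hiso' hdense'
end
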